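/- arXiv:1007.3467 — 4 statements merged into one kernel-verified Lean document; each statement's English description precedes it below -/
import Mathlib

section
/- Let n ≥ 1 and let σ be a permutation of {1,…,n} whose bandwidth w = max_i |σ(i) − i| satisfies w > 0. Then σ can be written as a product of at most 2w − 1 permutations of {1,…,n}, each of bandwidth at most 1. -/
/-- The bandwidth of a permutation `σ` of `{0,…,n-1}`: `max_i |σ(i) - i|`. -/
def bandwidth {n : ℕ} (σ : Equiv.Perm (Fin n)) : ℕ :=
  Finset.univ.sup fun i : Fin n => ((σ i : ℤ) - (i : ℤ)).natAbs

/-- `c` is a cut point of `σ` if `σ` maps the initial segment `{0,…,c}` onto itself. -/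
def IsCutPoint {n : ℕ} (σ : Equiv.Perm (Fin n)) (c : Fin n) : Prop :=
  ∀ j : Fin n, j ≤ c → σ j ≤ c

/-- Indices `i ≤ j` lie in the same section of `σ` if there is no cut point `c`
with `i ≤ c < j`. -/
def SameSection {n : ℕ} (σ : Equiv.Perm (Fin n)) (i j : Fin n) : Prop :=
  i ≤ j ∧ ∀ c : Fin n, i ≤ c → c < j → ¬ IsCutPoint σ c

/-- Unordered version of `SameSection`. -/
def InSameSection {n : ℕ} (σ : Equiv.Perm (Fin n)) (i j : Fin n) : Prop :=
  SameSection σ i j ∨ SameSection σ j i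

/-- `σ` is upper-canonical: for `i < j` with `σ(i) > i` and `σ(j) > j`, `σ(i) < σ(j)`. -/
def UpperCanonical {n : ℕ} (σ : Equiv.Perm (Fin n)) : Prop :=
  ∀ i j : Fin n, i < j → i < σ i → j < σ j → σ i < σ j

/-- `σ` is lower-canonical: for `i < j` with `σ(i) < i` and `σ(j) < j`, `σ(i) < σ(j)`. -/
def LowerCanonical {n : ℕ} (σ : Equiv.Perm (Fin n)) : Prop :=
  ∀ i j : Fin n, i < j → σ i < i → σ j < j → σ i < σ j

/-- `σ` is Strang canonical if it is both upper- and lower-canonical. -/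
def StrangCanonical {n : ℕ} (σ : Equiv.Perm (Fin n)) : Prop :=
  UpperCanonical σ ∧ LowerCanonical σ

/-- `σ` is row-settled: no indices `i < j` in the same section
with `σ(i) < i` (negative row) and `σ(j) > j` (positive row). -/
def RowSettled {n : ℕ} (σ : Equiv.Perm (Fin n)) : Prop :=
  ∀ i j : Fin n, i < j → SameSection σ i j → ¬ (σ i < i ∧ j < σ j)

/-- `σ` is settled if it is row-settled or column-settled
(column-settled means `σ⁻¹` is row-settled). -/
def Settled {n : ℕ} (σ : Equiv.Perm (Fin n)) : Prop :=
  RowSettled σ ∨ RowSettled σ⁻¹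

/-- The reducing permutation of `σ`: the product of the (pairwise disjoint)
transpositions `(i, i+1)` over all `i` with `σ(i) > i` and `σ(i+1) < i+1`. -/
def reducingPerm {n : ℕ} (σ : Equiv.Perm (Fin n)) : Equiv.Perm (Fin n) :=
  ((List.finRange n).filterMap fun i : Fin n =>
    if h : (i : ℕ) + 1 < n then
      let j : Fin n := ⟨(i : ℕ) + 1, h⟩
      if i < σ i ∧ σ j < j then some (Equiv.swap i j) else none
    else none).prod

/-- The reduction of `σ` is `σ` composed with its reducing permutation. -/
def reduction {n : ℕ} (σ : Equiv.Perm (Fin n)) : Equiv.Perm (Fin n) :=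
  σ * reducingPerm σ

/-- A bubblesort step for `σ`: a nonidentity permutation `t` that is a product of
pairwise disjoint adjacent transpositions `(i, i+1)`, each satisfying `σ(i) > σ(i+1)`. -/
def IsBubbleStep {n : ℕ} (σ t : Equiv.Perm (Fin n)) : Prop :=
  t ≠ 1 ∧ ∃ l : List (Fin n),
    l.Pairwise (fun i j => (i : ℕ) + 2 ≤ (j : ℕ)) ∧
    (∀ i ∈ l, ∃ h : (i : ℕ) + 1 < n, σ ⟨(i : ℕ) + 1, h⟩ < σ i) ∧
    t = (l.map fun i : Fin n =>
      (if h : (i : ℕ) + 1 < n then Equiv.swap i ⟨(i : ℕ) + 1, h⟩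
       else 1 : Equiv.Perm (Fin n))).prod

/-- The number of inversions of `σ`: pairs `i < j` with `σ(i) > σ(j)`. -/
def inversions {n : ℕ} (σ : Equiv.Perm (Fin n)) : ℕ :=
  (Finset.univ.filter fun p : Fin n × Fin n => p.1 < p.2 ∧ σ p.2 < σ p.1).card

/-- The cyclic shift by `s` on `{0,…,n-1}`: `i ↦ (i + s) mod n`. -/
def cyclicShift (n s : ℕ) : Equiv.Perm (Fin n) := (finRotate n) ^ s

/-!
Draw the wire of `i` in the plane as a hook: down the vertical line `x = i` to the point
`(i, σ i)`, then right along the horizontal line `y = σ i`. Sweep the plane with the diagonals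
`x = y + d + 1/2`. Along such a diagonal the wires come in the order of the coordinate
`max i (σ i + d + 1/2)`: for `d = -w` this is the order of the `i`, and for `d = w - 1` the order
of the `σ i`. Two wires can only cross at a lattice point `(j, σ i)`, and a wire passes exactly one
lattice point between two consecutive diagonals, so there it crosses at most one other wire and its
rank changes by at most one. The `2 * w - 1` changes of diagonal are the factors.
-/

open Equiv Finset Function

theorem bandwidth_le_iff {n : ℕ} {σ : Perm (Fin n)} {w : ℕ} :
    bandwidth σ ≤ w ↔ ∀ i, (σ i : ℕ) ≤ i + w ∧ (i : ℕ) ≤ σ i + w := by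
  simp only [bandwidth, Finset.sup_le_iff, mem_univ, true_imp_iff]
  exact forall_congr' fun i => by omega

section Ranking

variable {n : ℕ} {α : Type*} {β : Type*} [LinearOrder α] [LinearOrder β] {f : Fin n → α}

theorem sort_inv_lt_sort_inv_iff (hf : Injective f) {i j : Fin n} :
    (Tuple.sort f)⁻¹ i < (Tuple.sort f)⁻¹ j ↔ f i < f j := by
  have hmono : StrictMono (f ∘ Tuple.sort f) :=
    (Tuple.monotone_sort f).strictMono_of_injective (hf.comp (Tuple.sort f).injective)
  simpa using (hmono.lt_iff_lt (a := (Tuple.sort f)⁻¹ i) (b := (Tuple.sort f)⁻¹ j)).symm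

theorem coe_sort_inv_apply (hf : Injective f) (i : Fin n) :
    ((Tuple.sort f)⁻¹ i : ℕ) = #{j | f j < f i} := by
  have himage : ({j | f j < f i} : Finset (Fin n)) =
      (Iio ((Tuple.sort f)⁻¹ i)).map (Tuple.sort f).toEmbedding := by
    ext j
    simpa [mem_map_equiv] using (sort_inv_lt_sort_inv_iff hf).symm
  rw [himage, card_map, Fin.card_Iio]

theorem sort_inv_eq_of_lt (τ : Perm (Fin n)) (h : ∀ i j, τ i < τ j → f i < f j) :
    (Tuple.sort f)⁻¹ = τ := by
  have hmono : StrictMono (f ∘ ⇑τ⁻¹) := fun a b hab => h _ _ (by simpa using hab)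
  rw [inv_eq_iff_eq_inv, eq_comm, Tuple.eq_sort_iff]
  exact ⟨hmono.monotone, fun a b hab heq => absurd heq (hmono hab).ne⟩

theorem card_lt_le_card_lt_add_card_inversions {ι : Type*} [Fintype ι] {f : ι → α}
    (hf : Injective f) (g : ι → β) (i : ι) :
    #{j | g j < g i} ≤ #{j | f j < f i} + #{j | f i < f j ∧ g j < g i} := by
  classical
  refine (card_le_card fun j hj => ?_).trans (card_union_le _ _)
  simp only [mem_union, mem_filter_univ] at hj ⊢
  have hne : f j ≠ f i := hf.ne (ne_of_apply_ne g hj.ne)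
  exact hne.lt_or_gt.imp_right fun hij => ⟨hij, hj⟩

theorem bandwidth_sort_inv_div_sort_inv_le {g : Fin n → β} (hf : Injective f) (hg : Injective g)
    {w : ℕ} (hfg : ∀ i, #{j | f i < f j ∧ g j < g i} ≤ w)
    (hgf : ∀ i, #{j | g i < g j ∧ f j < f i} ≤ w) :
    bandwidth ((Tuple.sort f)⁻¹ / (Tuple.sort g)⁻¹) ≤ w := by
  refine bandwidth_le_iff.2 fun a => ?_
  obtain ⟨i, rfl⟩ := (Tuple.sort g)⁻¹.surjective a
  have hquot : ((Tuple.sort f)⁻¹ / (Tuple.sort g)⁻¹) ((Tuple.sort g)⁻¹ i) = (Tuple.sort f)⁻¹ i := by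
    rw [← Perm.mul_apply, div_mul_cancel]
  rw [hquot, coe_sort_inv_apply hf, coe_sort_inv_apply hg]
  exact ⟨(card_lt_le_card_lt_add_card_inversions hg f i).trans (by gcongr; exact hgf i),
    (card_lt_le_card_lt_add_card_inversions hf g i).trans (by gcongr; exact hfg i)⟩

end Ranking

section Sweep

variable {n : ℕ} (σ : Perm (Fin n)) (d : ℤ)

/-- The `x`-coordinate at which the hook-shaped wire of `i`, with corner `(i, σ i)`, meets the
diagonal `x = y + d + 1/2`. It is doubled to be an integer: even on the vertical part of the wire
and odd on the horizontal part. -/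
def sweepCoord (i : Fin n) : ℤ :=
  max (2 * i) (2 * σ i + 2 * d + 1)

theorem sweepCoord_injective : Injective (sweepCoord σ d) := by
  intro i j hij
  have hcorner : i = j ∨ σ i = σ j := by
    simp only [sweepCoord] at hij
    omega
  exact hcorner.elim id fun h => σ.injective h

variable {σ d}

theorem eq_add_of_sweepCoord_inversion {i j : Fin n}
    (hlt : sweepCoord σ d i < sweepCoord σ d j)
    (hgt : sweepCoord σ (d + 1) j < sweepCoord σ (d + 1) i) :
    (j : ℤ) = σ i + d + 1 := by
  simp only [sweepCoord] at hlt hgt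
  omega

theorem bandwidth_sort_sweepCoord_succ_div_le_one (σ : Perm (Fin n)) (d : ℤ) :
    bandwidth ((Tuple.sort (sweepCoord σ (d + 1)))⁻¹ / (Tuple.sort (sweepCoord σ d))⁻¹) ≤ 1 := by
  refine bandwidth_sort_inv_div_sort_inv_le (sweepCoord_injective σ _) (sweepCoord_injective σ _)
    (fun j => card_le_one.2 fun i hi i' hi' => ?_) (fun i => card_le_one.2 fun j hj j' hj' => ?_)
  · rw [mem_filter_univ] at hi hi'
    have hcross := eq_add_of_sweepCoord_inversion hi.2 hi.1
    have hcross' := eq_add_of_sweepCoord_inversion hi'.2 hi'.1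
    exact σ.injective (by omega)
  · rw [mem_filter_univ] at hj hj'
    have hcross := eq_add_of_sweepCoord_inversion hj.1 hj.2
    have hcross' := eq_add_of_sweepCoord_inversion hj'.1 hj'.2
    omega

theorem sort_inv_sweepCoord_eq_one {w : ℕ} (hσ : bandwidth σ ≤ w) :
    (Tuple.sort (sweepCoord σ (-w)))⁻¹ = 1 := by
  refine sort_inv_eq_of_lt 1 fun i j hij => ?_
  have hi := bandwidth_le_iff.1 hσ i
  simp only [Perm.coe_one, id_eq, sweepCoord] at hij ⊢
  omega

theorem sort_inv_sweepCoord_eq_self {w : ℕ} (hσ : bandwidth σ ≤ w) :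
    (Tuple.sort (sweepCoord σ (w - 1)))⁻¹ = σ := by
  refine sort_inv_eq_of_lt σ fun i j hij => ?_
  have hi := bandwidth_le_iff.1 hσ i
  simp only [sweepCoord]
  omega

end Sweep

/-- A permutation of `{1,…,n}` (n ≥ 1) of bandwidth `w > 0` is a product of
at most `2w - 1` permutations of bandwidth at most 1. -/
theorem stmt_0 (n : ℕ) (hn : 1 ≤ n) (σ : Equiv.Perm (Fin n))
    (hw : 0 < bandwidth σ) :
    ∃ L : List (Equiv.Perm (Fin n)),
      L.length ≤ 2 * bandwidth σ - 1 ∧ (∀ τ ∈ L, bandwidth τ ≤ 1) ∧ L.prod = σ := by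
  set w := bandwidth σ
  let ρ (k : ℕ) : Perm (Fin n) := (Tuple.sort (sweepCoord σ (w - 1 - k)))⁻¹
  have hstart : ρ 0 = σ := by simpa [ρ] using sort_inv_sweepCoord_eq_self le_rfl
  have hend : ρ (2 * w - 1) = 1 := by
    have hlast : (w : ℤ) - 1 - (2 * w - 1 : ℕ) = -w := by omega
    simpa only [ρ, hlast] using sort_inv_sweepCoord_eq_one le_rfl
  refine ⟨(List.range (2 * w - 1)).map fun k => ρ k / ρ (k + 1), by simp, ?_, ?_⟩
  · simp only [List.forall_mem_map]
    intro k _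
    have hnext : (w : ℤ) - 1 - k = w - 1 - (k + 1 : ℕ) + 1 := by omega
    simpa only [ρ, hnext] using bandwidth_sort_sweepCoord_succ_div_le_one σ _
  · rw [List.prod_range_div', hstart, hend, div_one]
end

section
/- Let σ be a settled Strang canonical permutation of {1,…,n} of bandwidth w > 0. Then σ can be written as a product of at most 2w − 1 permutations of {1,…,n}, each of bandwidth at most 1. -/
/-!
Let `σ` be row-settled; the column-settled case follows by taking inverses. Extend `σ` by the
identity to a permutation `f` of `ℕ` and sort it by odd-even transposition: the adjacent pairs are
compared alternately in two classes of positions, and the class that goes first is chosen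
independently in each section. Row-settledness says that a section contains at most one `p` with
`p < f p` and `f (p + 1) < p + 1`, so the choice can be made such that every such pair is compared
in the first round.

The sorting is analysed one threshold `v` at a time, as in the 0-1 principle: let `h x` be the
number of positions `< x` that carry a value `≥ v`. When the pair around the boundary `x` is
compared, the new value of `2 * h x - x` is less than the maximum of the old values of this
expression at `x - 1` and `x + 1`. Hence `T` rounds, the last of which compares the pair around
`v`, give `h v = 0` as soon as `2 * h x - x ≤ T - v` holds initially for `|x - v| ≤ T` of the right
parity. Bandwidth `w` supplies this for `T = 2 * w - 1`. If the pair around `v` is not compared in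
round `2 * w - 1`, then it is not compared in the first round either, so `h v < w` initially, and
this gain makes the bound hold for `T = 2 * w - 2`.
-/

open Equiv
open scoped Pointwise

namespace OddEvenSort

/-- Positions `< c` carry exactly the values `< c`. The end point is excluded, so that a cut point
`c` in the sense of `IsCutPoint` becomes a cut at `c + 1`. -/
def IsCut (f : Perm ℕ) (c : ℕ) : Prop :=
  ∀ p < c, f p < c

theorem isCut_zero (f : Perm ℕ) : IsCut f 0 :=
  fun _ hp => absurd hp (Nat.not_lt_zero _)

section Cut

variable {f g : Perm ℕ} {c : ℕ}

theorem IsCut.inv (hf : IsCut f c) : IsCut f⁻¹ c := by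
  have : Finite {p // p < c} := Set.finite_Iio c
  exact fun _ hp => Perm.perm_symm_on_of_perm_on_finite hf hp

theorem IsCut.apply_lt_iff (hf : IsCut f c) {p : ℕ} : f p < c ↔ p < c :=
  ⟨fun hp => by simpa using hf.inv _ hp, hf p⟩

theorem IsCut.mul (hf : IsCut f c) (hg : IsCut g c) : IsCut (f * g) c :=
  fun p hp => hf _ (hg p hp)

theorem IsCut.apply_eq_self (hc : IsCut f c) (hc' : IsCut f (c + 1)) : f c = c := by
  have := hc.apply_lt_iff (p := c)
  have := hc' c c.lt_succ_self
  omega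

theorem eq_one_of_forall_isCut (h : ∀ c, IsCut f c) : f = 1 :=
  Perm.ext fun c => (h c).apply_eq_self (h (c + 1))

end Cut

/-- The analogue for permutations of `ℕ` of having bandwidth at most `w`. -/
def DisplacementLE (f : Perm ℕ) (w : ℕ) : Prop :=
  ∀ p, f p ≤ p + w ∧ p ≤ f p + w

section Exchange

/-- No two elements are adjacent, so that the transpositions `(p, p + 1)` for `p ∈ S` are
disjoint. -/
def Sparse (S : Set ℕ) : Prop :=
  ∀ p ∈ S, p + 1 ∉ S

open Classical in
/-- The underlying function of `exchange`. -/
noncomputable def exchangeFun (S : Set ℕ) (p : ℕ) : ℕ :=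
  if p ∈ S then p + 1 else if ∃ q ∈ S, q + 1 = p then p - 1 else p

variable {S : Set ℕ} {p : ℕ}

theorem exchangeFun_of_mem (hp : p ∈ S) : exchangeFun S p = p + 1 :=
  if_pos hp

theorem exchangeFun_succ_of_mem (hS : Sparse S) (hp : p ∈ S) : exchangeFun S (p + 1) = p := by
  rw [exchangeFun, if_neg (hS p hp), if_pos ⟨p, hp, rfl⟩, Nat.add_sub_cancel]

theorem exchangeFun_of_notMem (hp : p ∉ S) (hp' : ¬ ∃ q ∈ S, q + 1 = p) :
    exchangeFun S p = p := by
  rw [exchangeFun, if_neg hp, if_neg hp']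

theorem exchangeFun_involutive (hS : Sparse S) : Function.Involutive (exchangeFun S) := by
  intro p
  by_cases hp : p ∈ S
  · rw [exchangeFun_of_mem hp, exchangeFun_succ_of_mem hS hp]
  by_cases hp' : ∃ q ∈ S, q + 1 = p
  · obtain ⟨q, hq, rfl⟩ := hp'
    rw [exchangeFun_succ_of_mem hS hq, exchangeFun_of_mem hq]
  · rw [exchangeFun_of_notMem hp hp', exchangeFun_of_notMem hp hp']

/-- The product of the disjoint transpositions `(p, p + 1)` for `p ∈ S`: one parallel round of
exchanges. -/
noncomputable def exchange (S : Set ℕ) (hS : Sparse S) : Perm ℕ :=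
  (exchangeFun_involutive hS).toPerm

theorem exchange_mul_self (hS : Sparse S) : exchange S hS * exchange S hS = 1 :=
  Perm.ext (exchangeFun_involutive hS)

theorem exchange_of_mem (hS : Sparse S) (hp : p ∈ S) : exchange S hS p = p + 1 :=
  exchangeFun_of_mem hp

theorem exchange_succ_of_mem (hS : Sparse S) (hp : p ∈ S) : exchange S hS (p + 1) = p :=
  exchangeFun_succ_of_mem hS hp

theorem displacementLE_exchange (hS : Sparse S) : DisplacementLE (exchange S hS) 1 := by
  intro p
  change exchangeFun S p ≤ p + 1 ∧ p ≤ exchangeFun S p + 1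
  unfold exchangeFun
  split_ifs <;> omega

theorem isCut_exchange (hS : Sparse S) {c : ℕ} (hc : ∀ p ∈ S, p + 1 ≠ c) :
    IsCut (exchange S hS) c := by
  intro p hpc
  change exchangeFun S p < c
  unfold exchangeFun
  split_ifs with hp
  · exact lt_of_le_of_ne hpc (hc p hp)
  all_goals omega

end Exchange

section Height

/-- The number of positions `< x` that carry a value `≥ v`. -/
def height (f : Perm ℕ) (v x : ℕ) : ℕ :=
  Nat.count (fun p => v ≤ f p) x

variable {f g : Perm ℕ} {v x : ℕ}

theorem height_succ (f : Perm ℕ) (v x : ℕ) :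
    height f v (x + 1) = height f v x + if v ≤ f x then 1 else 0 :=
  Nat.count_succ _ x

theorem height_eq_card (f : Perm ℕ) (v x : ℕ) :
    height f v x = ((Finset.range x).filter fun p => v ≤ f p).card :=
  Nat.count_eq_card_filter_range _ x

theorem height_self_eq_zero_iff : height f v v = 0 ↔ IsCut f v := by
  simp only [height, Nat.count_iff_forall_not, not_le, IsCut]

theorem height_le_sub {a : ℕ} (h : ∀ p < a, f p < v) (x : ℕ) : height f v x ≤ x - a := by
  rw [height_eq_card, ← Nat.card_Ico]
  refine Finset.card_le_card fun p hp => ?_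
  simp only [Finset.mem_filter, Finset.mem_range, Finset.mem_Ico] at hp ⊢
  exact ⟨not_lt.mp fun hpa => (h p hpa).not_ge hp.2, hp.1⟩

theorem height_add_le {m : ℕ} (hm : m ≤ v) (h : ∀ u < m, f⁻¹ u < x) :
    height f v x + m ≤ x := by
  have hdisj : Disjoint ((Finset.range x).filter fun p => v ≤ f p)
      ((Finset.range m).map f⁻¹.toEmbedding) := by
    rw [Finset.disjoint_left]
    intro p hp hp'
    obtain ⟨u, hu, rfl⟩ := Finset.mem_map.mp hp'
    simp only [Finset.mem_filter, Finset.mem_range, Equiv.coe_toEmbedding,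
      Perm.coe_inv, apply_symm_apply] at hp hu
    omega
  have hsub : ((Finset.range x).filter fun p => v ≤ f p) ∪
      ((Finset.range m).map f⁻¹.toEmbedding) ⊆ Finset.range x := by
    refine Finset.union_subset (Finset.filter_subset _ _) fun p hp => ?_
    obtain ⟨u, hu, rfl⟩ := Finset.mem_map.mp hp
    exact Finset.mem_range.mpr (h u (Finset.mem_range.mp hu))
  simpa only [Finset.card_union_of_disjoint hdisj, Finset.card_map, Finset.card_range,
    ← height_eq_card] using Finset.card_le_card hsub

theorem height_eq_zero_of_isCut {c : ℕ} (hc : IsCut f c) (hxc : x ≤ c) (hcv : c ≤ v) :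
    height f v x = 0 := by
  have := height_le_sub (f := f) (fun p hp => (hc p hp).trans_le hcv) x
  omega

theorem height_add_le_of_isCut {c : ℕ} (hc : IsCut f c) (hvc : v ≤ c) (hcx : c ≤ x) :
    height f v x + v ≤ x :=
  height_add_le le_rfl fun _ hu => (hc.inv _ (hu.trans_le hvc)).trans_le hcx

theorem height_succ_eq_or_of_le {p : ℕ} (h : f p ≤ f (p + 1)) (v : ℕ) :
    height f v (p + 1) = height f v p ∨ height f v (p + 1) + 1 = height f v (p + 2) := by
  rw [height_succ f v (p + 1), height_succ f v p]
  split_ifs <;> omega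

theorem height_mul_of_isCut (f : Perm ℕ) (v : ℕ) (hg : IsCut g x) :
    height (f * g) v x = height f v x := by
  rw [height_eq_card, height_eq_card]
  refine Finset.card_equiv g fun p => ?_
  rw [Finset.mem_filter, Finset.mem_filter, Finset.mem_range, Finset.mem_range, hg.apply_lt_iff,
    Perm.mul_apply]

section Exchange

variable {S : Set ℕ} (hS : Sparse S)

theorem height_mul_exchange_of_notMem (f : Perm ℕ) (v : ℕ) {p : ℕ} (hp : p ∉ S) :
    height (f * exchange S hS) v (p + 1) = height f v (p + 1) :=
  height_mul_of_isCut f v <| isCut_exchange hS fun _ hq h => hp (Nat.succ_injective h ▸ hq)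

theorem height_mul_exchange_le (hdesc : ∀ p ∈ S, f (p + 1) < f p) (v x : ℕ) :
    height (f * exchange S hS) v x ≤ height f v x := by
  by_cases hx : ∃ p ∈ S, p + 1 = x
  · obtain ⟨p, hp, rfl⟩ := hx
    have hcut : IsCut (exchange S hS) p :=
      isCut_exchange hS fun q hq hqp => hS q hq (hqp ▸ hp)
    have := hdesc p hp
    rw [height_succ, height_succ, height_mul_of_isCut f v hcut, Perm.mul_apply,
      exchange_of_mem hS hp]
    split_ifs <;> omega
  · push Not at hx
    exact (height_mul_of_isCut f v (isCut_exchange hS hx)).le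

theorem height_mul_exchange_le_or (hdesc : ∀ p ∈ S, f (p + 1) < f p) {p : ℕ}
    (hp : p ∉ S → f p ≤ f (p + 1)) (v : ℕ) :
    height (f * exchange S hS) v (p + 1) ≤ height f v p ∨
      height (f * exchange S hS) v (p + 1) + 1 ≤ height f v (p + 2) := by
  by_cases hpS : p ∈ S
  · have hsorted : (f * exchange S hS) p ≤ (f * exchange S hS) (p + 1) := by
      simpa only [Perm.mul_apply, exchange_of_mem hS hpS, exchange_succ_of_mem hS hpS]
        using (hdesc p hpS).le
    have := height_succ_eq_or_of_le hsorted v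
    have := height_mul_exchange_le hS hdesc v p
    have := height_mul_exchange_le hS hdesc v (p + 2)
    omega
  · rw [height_mul_exchange_of_notMem hS f v hpS]
    exact (height_succ_eq_or_of_le (hp hpS) v).imp Eq.le Eq.le

end Exchange

end Height

section Phase

/-- The pairs exchanged by the reducing permutation: `p` is mapped up and `p + 1` is mapped down. -/
def IsTurn (f : Perm ℕ) (p : ℕ) : Prop :=
  p < f p ∧ f (p + 1) < p + 1

/-- `x` and `y` are boundaries between consecutive positions interior to the same section of `f`,
where the boundary between `p` and `p + 1` is numbered `p + 1`. -/
def SameBlock (f : Perm ℕ) (x y : ℕ) : Prop :=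
  ∀ c ∈ Set.uIcc x y, ¬ IsCut f c

/-- A choice of starting phase of the odd-even sort, constant on each section, for which every turn
is compared in round `0`. -/
structure SectionPhase (f : Perm ℕ) where
  phase : ℕ → ℕ
  phase_eq : ∀ {x y}, SameBlock f x y → phase x = phase y
  phase_turn : ∀ {p}, IsTurn f p → phase (p + 1) = p

variable {f : Perm ℕ}

theorem IsTurn.not_isCut {p : ℕ} (h : IsTurn f p) : ¬ IsCut f (p + 1) := fun hc => by
  have := hc p p.lt_succ_self
  have := h.1
  omega

theorem SameBlock.symm {x y : ℕ} (h : SameBlock f x y) : SameBlock f y x :=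
  fun c hc => h c (Set.uIcc_comm y x ▸ hc)

theorem SameBlock.trans {x y z : ℕ} (hxy : SameBlock f x y) (hyz : SameBlock f y z) :
    SameBlock f x z :=
  fun c hc => (Set.uIcc_subset_uIcc_union_uIcc hc).elim (hxy c) (hyz c)

theorem IsTurn.sameBlock_self {p : ℕ} (h : IsTurn f p) : SameBlock f (p + 1) (p + 1) := by
  simpa only [SameBlock, Set.uIcc_self, Set.mem_singleton_iff, forall_eq] using h.not_isCut

theorem nonempty_sectionPhase
    (h : ∀ p q, IsTurn f p → IsTurn f q → SameBlock f (p + 1) (q + 1) → p = q) :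
    Nonempty (SectionPhase f) := by
  refine ⟨⟨fun x => sInf {p | IsTurn f p ∧ SameBlock f x (p + 1)}, ?_, ?_⟩⟩
  · intro x y hxy
    have hiff (p : ℕ) : SameBlock f x (p + 1) ↔ SameBlock f y (p + 1) :=
      ⟨hxy.symm.trans, hxy.trans⟩
    simp only [hiff]
  · intro p hp
    have hsingleton : {q | IsTurn f q ∧ SameBlock f (p + 1) (q + 1)} = {p} :=
      Set.eq_singleton_iff_unique_mem.mpr
        ⟨⟨hp, hp.sameBlock_self⟩, fun q hq => (h p q hp hq.1 hq.2).symm⟩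
    simp only [hsingleton, csInf_singleton]

end Phase

section OddEvenRounds

variable {f : Perm ℕ} (φ : SectionPhase f)

/-- The pairs `(p, p + 1)` exchanged in round `t` when the current arrangement is `g`. -/
def activePairs (g : Perm ℕ) (t : ℕ) : Set ℕ :=
  {p | ¬ IsCut f (p + 1) ∧ Even (p + t + φ.phase (p + 1)) ∧ g (p + 1) < g p}

theorem sparse_activePairs (g : Perm ℕ) (t : ℕ) : Sparse (activePairs φ g t) := by
  rintro p ⟨hcut, heven, -⟩ ⟨hcut', heven', -⟩
  have hblock : SameBlock f (p + 1) (p + 1 + 1) := by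
    intro c hc
    rw [Set.uIcc_of_le (Nat.le_succ _), Set.mem_Icc] at hc
    obtain rfl | rfl : c = p + 1 ∨ c = p + 1 + 1 := by omega
    exacts [hcut, hcut']
  have := φ.phase_eq hblock
  grind

/-- The exchanges of round `t` when the current arrangement is `g`. -/
noncomputable def sortStep (g : Perm ℕ) (t : ℕ) : Perm ℕ :=
  exchange (activePairs φ g t) (sparse_activePairs φ g t)

/-- The arrangement after `t` rounds of the odd-even sort of `f`. -/
noncomputable def sortState : ℕ → Perm ℕ
  | 0 => f
  | t + 1 => sortState t * sortStep φ (sortState t) t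

theorem isCut_sortStep {c : ℕ} (hc : IsCut f c) (g : Perm ℕ) (t : ℕ) :
    IsCut (sortStep φ g t) c :=
  isCut_exchange _ fun _ hp hpc => hp.1 (hpc ▸ hc)

theorem isCut_sortState {c : ℕ} (hc : IsCut f c) (t : ℕ) : IsCut (sortState φ t) c := by
  induction t with
  | zero => exact hc
  | succ t ih => exact ih.mul (isCut_sortStep φ hc _ t)

theorem height_sortState_succ_le (t v x : ℕ) :
    height (sortState φ (t + 1)) v x ≤ height (sortState φ t) v x :=
  height_mul_exchange_le _ (fun _ hp => hp.2.2) v x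

theorem height_sortState_succ_le_or {t p : ℕ} (hcut : ¬ IsCut f (p + 1))
    (heven : Even (p + t + φ.phase (p + 1))) (v : ℕ) :
    height (sortState φ (t + 1)) v (p + 1) ≤ height (sortState φ t) v p ∨
      height (sortState φ (t + 1)) v (p + 1) + 1 ≤ height (sortState φ t) v (p + 2) :=
  height_mul_exchange_le_or (sparse_activePairs φ _ t) (fun _ hp => hp.2.2)
    (fun hp => not_lt.mp fun hlt => hp ⟨hcut, heven, hlt⟩) v

/-- The height bound, on the cone of radius `s` around `v`, under which `s` more rounds place all
values `< v` before all values `≥ v`. It is the inequality `2 * height g v x - x ≤ s - v` without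
subtraction, and only boundaries `x` of the parity of `v + s` can influence the outcome. -/
def ConeBound (g : Perm ℕ) (v s : ℕ) : Prop :=
  ∀ x, x ≤ v + s → v ≤ x + s → Even (x + v + s) → 2 * height g v x + v ≤ s + x

theorem ConeBound.sortState_succ {v t s : ℕ} (h : ConeBound (sortState φ t) v (s + 1))
    (heven : Even (v + (t + (s + 1)) + φ.phase v)) :
    ConeBound (sortState φ (t + 1)) v s := by
  intro x hxv hvx hx
  by_cases hblock : SameBlock f x v
  · obtain _ | p := x
    · exact absurd (isCut_zero f) (hblock 0 Set.left_mem_uIcc)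
    have hactive : Even (p + t + φ.phase (p + 1)) := by
      rw [φ.phase_eq hblock]
      grind
    have := height_sortState_succ_le_or φ (hblock _ Set.left_mem_uIcc) hactive v
    have := h p (by omega) (by omega) (by grind)
    have := h (p + 2) (by omega) (by omega) (by grind)
    omega
  · simp only [SameBlock, not_forall, not_not, Set.mem_uIcc] at hblock
    obtain ⟨c, ⟨hxc, hcv⟩ | ⟨hvc, hcx⟩, hc⟩ := hblock
    · have := height_eq_zero_of_isCut (isCut_sortState φ hc (t + 1)) hxc hcv
      omega
    · have := height_add_le_of_isCut (isCut_sortState φ hc (t + 1)) hvc hcx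
      omega

theorem ConeBound.isCut_sortState {v T : ℕ} (h : ConeBound f v T)
    (heven : Even (v + T + φ.phase v)) : IsCut (sortState φ T) v := by
  have hcone (t s : ℕ) (hts : t + s = T) : ConeBound (sortState φ t) v s := by
    induction t generalizing s with
    | zero =>
      obtain rfl : s = T := by omega
      exact h
    | succ t ih =>
      obtain rfl : t + (s + 1) = T := by omega
      exact (ih (s + 1) rfl).sortState_succ φ heven
  have hfinal : ConeBound (sortState φ T) v 0 := hcone T 0 rfl
  have := hfinal v le_rfl le_rfl (Even.add_self v)
  exact height_self_eq_zero_iff.mp (by omega)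

end OddEvenRounds

section Displacement

variable {f : Perm ℕ} {w : ℕ}

theorem DisplacementLE.height_le (hf : DisplacementLE f w) (v x : ℕ) :
    height f v x ≤ x - (v - w) :=
  height_le_sub (fun p hp => by have := hf p; omega) x

theorem DisplacementLE.inv (hf : DisplacementLE f w) : DisplacementLE f⁻¹ w := fun p => by
  simpa only [Perm.coe_inv, apply_symm_apply] using (hf (f⁻¹ p)).symm

theorem DisplacementLE.height_add_min_le (hf : DisplacementLE f w) (v x : ℕ) :
    height f v x + min v (x - w) ≤ x :=
  height_add_le (min_le_left _ _) fun u hu => by have := hf.inv u; omega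

theorem DisplacementLE.height_self_lt (hw : 0 < w) (hf : DisplacementLE f w) {v : ℕ}
    (hv : ∀ p, p + 1 = v → ¬ IsTurn f p) : height f v v < w := by
  obtain _ | p := v
  · exact hw
  by_cases hp : p < f p
  · have hp' : p + 1 ≤ f (p + 1) := not_lt.mp fun h => hv p rfl ⟨hp, h⟩
    have := height_add_le (f := f) (v := p + 1) (x := p + 1) (m := min (p + 1) (p + 2 - w))
      (min_le_left _ _) fun u hu => by
        have := hf.inv u
        have hne : f⁻¹ u ≠ p + 1 := fun h => by
          rw [Perm.inv_eq_iff_eq] at h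
          omega
        omega
    omega
  · rw [height_succ, if_neg (by omega)]
    have := hf.height_le (p + 1) p
    omega

theorem DisplacementLE.coneBound (hf : DisplacementLE f w) (v : ℕ) :
    ConeBound f v (2 * w - 1) := by
  intro x _ _ _
  have := hf.height_le v x
  have := hf.height_add_min_le v x
  grind

theorem DisplacementLE.coneBound_of_height_lt (hf : DisplacementLE f w) {v : ℕ}
    (hv : height f v v < w) : ConeBound f v (2 * w - 2) := by
  intro x _ _ _
  have := hf.height_le v x
  have := hf.height_add_min_le v x
  obtain rfl | hne := eq_or_ne x v
  · omega
  · grind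

theorem sortState_eq_one (hw : 0 < w) (hf : DisplacementLE f w) (φ : SectionPhase f) :
    sortState φ (2 * w - 1) = 1 := by
  refine eq_one_of_forall_isCut fun v => ?_
  by_cases heven : Even (v + (2 * w - 1) + φ.phase v)
  · exact (hf.coneBound v).isCut_sortState φ heven
  have hturn : ∀ p, p + 1 = v → ¬ IsTurn f p := by
    rintro p rfl hp
    rw [φ.phase_turn hp] at heven
    grind
  have hcut : IsCut (sortState φ (2 * w - 2)) v :=
    (hf.coneBound_of_height_lt (hf.height_self_lt hw hturn)).isCut_sortState φ (by grind)
  have hmono := height_sortState_succ_le φ (2 * w - 2) v v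
  rw [show 2 * w - 2 + 1 = 2 * w - 1 by omega, height_self_eq_zero_iff.mpr hcut] at hmono
  exact height_self_eq_zero_iff.mp (Nat.le_zero.mp hmono)

/-- The permutations of displacement at most one that respect the sections of `f`. -/
def sectionSteps (f : Perm ℕ) : Set (Perm ℕ) :=
  {τ | DisplacementLE τ 1 ∧ ∀ c, IsCut f c → IsCut τ c}

theorem exists_sortState_mul_eq (φ : SectionPhase f) (t : ℕ) :
    ∃ ρ ∈ sectionSteps f ^ t, sortState φ t * ρ = f := by
  induction t with
  | zero => exact ⟨1, by simp, mul_one f⟩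
  | succ t ih =>
    obtain ⟨ρ, hρ, hprod⟩ := ih
    have hstep : sortStep φ (sortState φ t) t ∈ sectionSteps f :=
      ⟨displacementLE_exchange _, fun c hc => isCut_sortStep φ hc _ t⟩
    refine ⟨sortStep φ (sortState φ t) t * ρ, ?_, ?_⟩
    · rw [pow_succ']
      exact Set.mul_mem_mul hstep hρ
    · calc sortState φ t * sortStep φ (sortState φ t) t * (sortStep φ (sortState φ t) t * ρ)
          = sortState φ t * (sortStep φ (sortState φ t) t * sortStep φ (sortState φ t) t) * ρ := by
            group
        _ = f := by rw [sortStep, exchange_mul_self, mul_one, hprod]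

theorem mem_sectionSteps_pow (hw : 0 < w) (hf : DisplacementLE f w) (φ : SectionPhase f) :
    f ∈ sectionSteps f ^ (2 * w - 1) := by
  obtain ⟨ρ, hρ, hprod⟩ := exists_sortState_mul_eq φ (2 * w - 1)
  rw [sortState_eq_one hw hf, one_mul] at hprod
  exact hprod ▸ hρ

end Displacement

section Fin

variable {n : ℕ}

/-- Extension of permutations of `Fin n` to `ℕ` by the identity. -/
noncomputable abbrev extendNat : Perm (Fin n) →* Perm ℕ :=
  Perm.viaEmbeddingHom Fin.valEmbedding

theorem extendNat_val (σ : Perm (Fin n)) (i : Fin n) : extendNat σ i = σ i :=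
  Perm.viaEmbedding_apply σ Fin.valEmbedding i

theorem extendNat_of_le (σ : Perm (Fin n)) {p : ℕ} (hp : n ≤ p) : extendNat σ p = p :=
  Perm.viaEmbedding_apply_of_notMem σ Fin.valEmbedding p
    (by rintro ⟨i, rfl⟩; exact hp.not_gt i.isLt)

theorem isCut_extendNat_succ {σ : Perm (Fin n)} {c : Fin n} (hc : IsCutPoint σ c) :
    IsCut (extendNat σ) (c + 1) := by
  intro p hp
  lift p to Fin n using by omega
  rw [extendNat_val]
  exact Nat.lt_succ_of_le (hc p (Nat.le_of_lt_succ hp))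

theorem isCut_extendNat_of_le (σ : Perm (Fin n)) {c : ℕ} (hc : n ≤ c) :
    IsCut (extendNat σ) c := by
  intro p hp
  obtain hpn | hpn := lt_or_ge p n
  · lift p to Fin n using hpn
    rw [extendNat_val]
    exact (σ p).isLt.trans_le hc
  · rwa [extendNat_of_le σ hpn]

theorem exists_extendNat_eq {τ : Perm ℕ} (hτ : ∀ c, n ≤ c → IsCut τ c) :
    ∃ ρ : Perm (Fin n), extendNat ρ = τ := by
  have : Finite {p // p < n} := Set.finite_Iio n
  let ρ : Perm (Fin n) := Fin.equivSubtype.symm.permCongr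
    (Perm.subtypePermOfFintype τ (hτ n le_rfl))
  refine ⟨ρ, Perm.ext fun p => ?_⟩
  obtain hpn | hpn := lt_or_ge p n
  · lift p to Fin n using hpn
    rw [extendNat_val]
    rfl
  · rw [extendNat_of_le ρ hpn, (hτ p hpn).apply_eq_self (hτ (p + 1) (by omega))]

theorem bandwidth_le_iff {σ : Perm (Fin n)} {w : ℕ} :
    bandwidth σ ≤ w ↔ ∀ i, (σ i : ℕ) ≤ i + w ∧ (i : ℕ) ≤ σ i + w := by
  simp only [bandwidth, Finset.sup_le_iff, Finset.mem_univ, true_implies]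
  exact forall_congr' fun i => by omega

theorem bandwidth_le_iff_displacementLE {σ : Perm (Fin n)} {w : ℕ} :
    bandwidth σ ≤ w ↔ DisplacementLE (extendNat σ) w := by
  rw [bandwidth_le_iff]
  refine ⟨fun h p => ?_, fun h i => by simpa only [extendNat_val] using h i⟩
  obtain hpn | hpn := lt_or_ge p n
  · lift p to Fin n using hpn
    simpa only [extendNat_val] using h p
  · rw [extendNat_of_le σ hpn]
    omega

theorem bandwidth_inv (σ : Perm (Fin n)) : bandwidth σ⁻¹ = bandwidth σ := by
  have hle (ρ : Perm (Fin n)) : bandwidth ρ⁻¹ ≤ bandwidth ρ := by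
    rw [bandwidth_le_iff_displacementLE, map_inv]
    exact (bandwidth_le_iff_displacementLE.mp le_rfl).inv
  exact (hle σ).antisymm (by simpa only [inv_inv] using hle σ⁻¹)

theorem inv_setOf_bandwidth_le (n w : ℕ) :
    {τ : Perm (Fin n) | bandwidth τ ≤ w}⁻¹ = {τ | bandwidth τ ≤ w} := by
  ext τ
  simp only [Set.mem_inv, Set.mem_ofPred_eq, bandwidth_inv]

theorem eq_of_isTurn_of_sameBlock {σ : Perm (Fin n)} (hσ : RowSettled σ) {p q : ℕ}
    (hp : IsTurn (extendNat σ) p) (hq : IsTurn (extendNat σ) q)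
    (hpq : SameBlock (extendNat σ) (p + 1) (q + 1)) : p = q := by
  wlog hlt : p < q generalizing p q
  · obtain rfl | hgt := (not_lt.mp hlt).eq_or_lt
    · rfl
    · exact (this hq hp hpq.symm hgt).symm
  exfalso
  obtain ⟨-, hdown⟩ := hp
  obtain ⟨hup, -⟩ := hq
  have hqn : q < n := not_le.mp fun h => hup.ne (extendNat_of_le σ h).symm
  have hne : p + 1 ≠ q := by rintro rfl; omega
  lift q to Fin n using hqn
  obtain ⟨i, hi⟩ : ∃ i : Fin n, (i : ℕ) = p + 1 := ⟨⟨p + 1, by omega⟩, rfl⟩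
  rw [← hi, extendNat_val] at hdown
  rw [extendNat_val] at hup
  have hsec : SameSection σ i q := by
    refine ⟨Fin.le_def.mpr (by omega), fun c hic hcq hc => ?_⟩
    refine hpq (c + 1) ?_ (isCut_extendNat_succ hc)
    simp only [Fin.le_def, Fin.lt_def, Set.mem_uIcc] at hic hcq ⊢
    omega
  exact hσ i q (Fin.lt_def.mpr (by omega)) hsec ⟨hdown, hup⟩

theorem sectionSteps_extendNat_subset (σ : Perm (Fin n)) :
    sectionSteps (extendNat σ) ⊆ extendNat '' {τ : Perm (Fin n) | bandwidth τ ≤ 1} := by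
  rintro τ ⟨hdisp, hcut⟩
  obtain ⟨ρ, rfl⟩ := exists_extendNat_eq fun c hc => hcut c (isCut_extendNat_of_le σ hc)
  exact ⟨ρ, bandwidth_le_iff_displacementLE.mpr hdisp, rfl⟩

theorem mem_setOf_bandwidth_le_one_pow_of_rowSettled {σ : Perm (Fin n)} (hσ : RowSettled σ)
    (hw : 0 < bandwidth σ) :
    σ ∈ {τ : Perm (Fin n) | bandwidth τ ≤ 1} ^ (2 * bandwidth σ - 1) := by
  obtain ⟨φ⟩ := nonempty_sectionPhase fun _ _ => eq_of_isTurn_of_sameBlock hσ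
  have hmem := Set.pow_subset_pow_left (sectionSteps_extendNat_subset σ)
    (mem_sectionSteps_pow hw (bandwidth_le_iff_displacementLE.mp le_rfl) φ)
  rw [← Set.image_pow] at hmem
  exact (Perm.viaEmbeddingHom_injective _).mem_set_image.mp hmem

theorem mem_setOf_bandwidth_le_one_pow_of_settled {σ : Perm (Fin n)} (hσ : Settled σ)
    (hw : 0 < bandwidth σ) :
    σ ∈ {τ : Perm (Fin n) | bandwidth τ ≤ 1} ^ (2 * bandwidth σ - 1) := by
  obtain hrow | hcol := hσ
  · exact mem_setOf_bandwidth_le_one_pow_of_rowSettled hrow hw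
  · have hmem := mem_setOf_bandwidth_le_one_pow_of_rowSettled hcol (by rwa [bandwidth_inv])
    rwa [bandwidth_inv, ← Set.mem_inv, ← inv_pow, inv_setOf_bandwidth_le] at hmem

end Fin

end OddEvenSort

theorem stmt_1_general {n : ℕ} {σ : Perm (Fin n)} (hsettled : Settled σ) (hw : 0 < bandwidth σ) :
    ∃ L : List (Perm (Fin n)),
      L.length ≤ 2 * bandwidth σ - 1 ∧ (∀ τ ∈ L, bandwidth τ ≤ 1) ∧ L.prod = σ := by
  obtain ⟨τ, hτ⟩ :=
    Set.mem_pow.mp (OddEvenSort.mem_setOf_bandwidth_le_one_pow_of_settled hsettled hw)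
  refine ⟨List.ofFn fun i => (τ i : Perm (Fin n)), by simp, ?_, hτ⟩
  exact List.forall_mem_ofFn_iff.mpr fun i => (τ i).2

/-- A settled Strang canonical permutation of bandwidth `w > 0` is a product
of at most `2w - 1` permutations of bandwidth at most 1. -/
theorem stmt_1 (n : ℕ) (σ : Equiv.Perm (Fin n))
    (hsettled : Settled σ) (hsc : StrangCanonical σ)
    (hw : 0 < bandwidth σ) :
    ∃ L : List (Equiv.Perm (Fin n)),
      L.length ≤ 2 * bandwidth σ - 1 ∧ (∀ τ ∈ L, bandwidth τ ≤ 1) ∧ L.prod = σ :=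
  stmt_1_general hsettled hw
end

section
/- Let σ be a Strang canonical permutation of {1,…,n}. Then the reduction of σ is Strang canonical. Moreover, if every fixed point of σ lies in a trivial section, then every fixed point of the reduction of σ lies in a trivial section. -/
/-!
Reducing exchanges the values of `σ` at adjacent positions `i ⋖ j` with `i < σ i` and `σ j < j`.
Every excedance of the reduction therefore comes from an excedance of `σ` at the same or the
preceding position, and moving distinct positions, without collision, by at most one place to the
left does not change their order. The same holds for deficiencies, moved to the right.

A fixed point of the reduction is a fixed point of `σ`, or it belongs to a swapped pair `i ⋖ j`: it
is `i` with `σ j = i`, or `j` with `σ i = j`. In the last two cases canonicity of `σ` forces `σ` to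
preserve the initial segment below `i`, respectively up to `j`. The reduction preserves every
initial segment that `σ` preserves, and a fixed point lies in a trivial section exactly when the
initial segment ending at it (or, equivalently, just before it) is preserved.
-/

section Reduction

open Equiv Set

variable {n : ℕ} {σ : Perm (Fin n)} {i j i' j' m x : Fin n}

/-- `(i, j)` is a pair of adjacent indices exchanged by the reducing permutation of `σ`. Adjacency
is expressed by the covering relation `i ⋖ j`, so that the arguments stay in the linear order
`Fin n`, without arithmetic on indices. -/
structure IsReducingPair (σ : Perm (Fin n)) (i j : Fin n) : Prop where
  covBy : i ⋖ j
  lt_apply : i < σ i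
  apply_lt : σ j < j

/-- The transposition that the index `i` contributes to the product defining `reducingPerm σ`,
if there is one. -/
def reducingSwap (σ : Perm (Fin n)) (i : Fin n) : Option (Perm (Fin n)) :=
  if h : (i : ℕ) + 1 < n then
    let j : Fin n := ⟨(i : ℕ) + 1, h⟩
    if i < σ i ∧ σ j < j then some (swap i j) else none
  else none

theorem reducingSwap_eq_some_iff {τ : Perm (Fin n)} :
    reducingSwap σ i = some τ ↔ ∃ j, IsReducingPair σ i j ∧ swap i j = τ := by
  constructor
  · intro h
    simp only [reducingSwap] at h
    split_ifs at h with hi hσ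
    exact ⟨⟨i + 1, hi⟩, ⟨by simp, hσ.1, hσ.2⟩, Option.some_injective _ h⟩
  · rintro ⟨j, ⟨hij, hi, hj⟩, rfl⟩
    have hval : (i : ℕ) + 1 = j := by simpa using hij
    simp [reducingSwap, hval, hi, hj]

theorem IsReducingPair.disjoint_swap (h : IsReducingPair σ i j) (h' : IsReducingPair σ i' j')
    (hne : i ≠ i') : (swap i j).Disjoint (swap i' j') := by
  have hij' : i ≠ j' := by rintro rfl; exact h.lt_apply.asymm h'.apply_lt
  have hji' : j ≠ i' := by rintro rfl; exact h.apply_lt.asymm h'.lt_apply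
  have hjj' : j ≠ j' := by rintro rfl; exact hne (h.covBy.unique_left h'.covBy)
  apply Perm.disjoint_swap_swap
  simp [h.covBy.ne, h'.covBy.ne, hne, hij', hji', hjj']

theorem pairwise_disjoint_reducingSwap (σ : Perm (Fin n)) :
    ((List.finRange n).filterMap (reducingSwap σ)).Pairwise Perm.Disjoint := by
  refine List.pairwise_filterMap.2 ((List.nodup_finRange n).imp fun hne τ hτ τ' hτ' => ?_)
  obtain ⟨j, hij, rfl⟩ := reducingSwap_eq_some_iff.1 hτ
  obtain ⟨j', hij', rfl⟩ := reducingSwap_eq_some_iff.1 hτ'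
  exact hij.disjoint_swap hij' hne

theorem IsReducingPair.reducingPerm_apply_of_mem_support (h : IsReducingPair σ i j)
    (hx : x ∈ (swap i j).support) : reducingPerm σ x = swap i j x := by
  have hmem : swap i j ∈ (List.finRange n).filterMap (reducingSwap σ) :=
    List.mem_filterMap.2 ⟨i, List.mem_finRange i, reducingSwap_eq_some_iff.2 ⟨j, h, rfl⟩⟩
  exact (Perm.eq_on_support_mem_disjoint hmem (pairwise_disjoint_reducingSwap σ) x hx).symm

theorem IsReducingPair.reducingPerm_apply_left (h : IsReducingPair σ i j) :
    reducingPerm σ i = j := by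
  rw [h.reducingPerm_apply_of_mem_support (by simp [Perm.support_swap h.covBy.ne]), swap_apply_left]

theorem IsReducingPair.reducingPerm_apply_right (h : IsReducingPair σ i j) :
    reducingPerm σ j = i := by
  rw [h.reducingPerm_apply_of_mem_support (by simp [Perm.support_swap h.covBy.ne]),
    swap_apply_right]

theorem exists_isReducingPair_of_reducingPerm_apply_ne (hx : reducingPerm σ x ≠ x) :
    ∃ i j, IsReducingPair σ i j ∧ (x = i ∨ x = j) := by
  obtain ⟨τ, hτ, hxτ⟩ := Perm.exists_mem_support_of_mem_support_prod (Perm.mem_support.2 hx)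
  obtain ⟨i, -, hi⟩ := List.mem_filterMap.1 hτ
  obtain ⟨j, hij, rfl⟩ := reducingSwap_eq_some_iff.1 hi
  exact ⟨i, j, hij, by simpa [Perm.support_swap hij.covBy.ne] using hxτ⟩

theorem reducingPerm_apply_trichotomy (σ : Perm (Fin n)) (x : Fin n) :
    IsReducingPair σ x (reducingPerm σ x) ∨ IsReducingPair σ (reducingPerm σ x) x ∨
      reducingPerm σ x = x := by
  by_cases hx : reducingPerm σ x = x
  · exact .inr (.inr hx)
  · obtain ⟨i, j, hij, rfl | rfl⟩ := exists_isReducingPair_of_reducingPerm_apply_ne hx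
    · exact .inl (hij.reducingPerm_apply_left.symm ▸ hij)
    · exact .inr (.inl (hij.reducingPerm_apply_right.symm ▸ hij))

theorem reduction_apply (σ : Perm (Fin n)) (x : Fin n) :
    reduction σ x = σ (reducingPerm σ x) :=
  rfl

theorem reducingPerm_wcovBy_and_lt_apply_of_lt_reduction (hx : x < reduction σ x) :
    reducingPerm σ x ⩿ x ∧ reducingPerm σ x < σ (reducingPerm σ x) := by
  rw [reduction_apply] at hx
  rcases reducingPerm_apply_trichotomy σ x with h | h | h
  · exact absurd (h.covBy.le_of_lt h.apply_lt) hx.not_ge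
  · exact ⟨h.covBy.wcovBy, h.lt_apply⟩
  · rw [h] at hx ⊢
    exact ⟨.rfl, hx⟩

theorem wcovBy_reducingPerm_and_apply_lt_of_reduction_lt (hx : reduction σ x < x) :
    x ⩿ reducingPerm σ x ∧ σ (reducingPerm σ x) < reducingPerm σ x := by
  rw [reduction_apply] at hx
  rcases reducingPerm_apply_trichotomy σ x with h | h | h
  · exact ⟨h.covBy.wcovBy, h.apply_lt⟩
  · exact absurd (h.covBy.ge_of_gt h.lt_apply) hx.not_ge
  · rw [h] at hx ⊢
    exact ⟨.rfl, hx⟩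

theorem upperCanonical_reduction (hσ : UpperCanonical σ) : UpperCanonical (reduction σ) := by
  intro x y hxy hx hy
  obtain ⟨hcovx, hexcx⟩ := reducingPerm_wcovBy_and_lt_apply_of_lt_reduction hx
  obtain ⟨hcovy, hexcy⟩ := reducingPerm_wcovBy_and_lt_apply_of_lt_reduction hy
  have hle : reducingPerm σ x ≤ reducingPerm σ y := hcovx.le.trans (hcovy.le_of_lt hxy)
  exact hσ _ _ (hle.lt_of_ne ((reducingPerm σ).injective.ne hxy.ne)) hexcx hexcy

theorem lowerCanonical_reduction (hσ : LowerCanonical σ) : LowerCanonical (reduction σ) := by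
  intro x y hxy hx hy
  obtain ⟨hcovx, hdefx⟩ := wcovBy_reducingPerm_and_apply_lt_of_reduction_lt hx
  obtain ⟨hcovy, hdefy⟩ := wcovBy_reducingPerm_and_apply_lt_of_reduction_lt hy
  have hle : reducingPerm σ x ≤ reducingPerm σ y := (hcovx.ge_of_gt hxy).trans hcovy.le
  exact hσ _ _ (hle.lt_of_ne ((reducingPerm σ).injective.ne hxy.ne)) hdefx hdefy

theorem mapsTo_reduction_of_isLowerSet {s : Set (Fin n)} (hs : IsLowerSet s)
    (h : MapsTo σ s s) : MapsTo (reduction σ) s s := by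
  intro x hx
  refine h (?_ : reducingPerm σ x ∈ s)
  rcases reducingPerm_apply_trichotomy σ x with hp | hp | hp
  · exact hs (hp.covBy.ge_of_gt hp.lt_apply) (h hx)
  · exact hs hp.covBy.le hx
  · rwa [hp]

theorem isCutPoint_reduction (h : IsCutPoint σ m) : IsCutPoint (reduction σ) m :=
  mapsTo_reduction_of_isLowerSet (isLowerSet_Iic m) h

theorem isCutPoint_iff_mapsTo_Iio (hm : σ m = m) :
    IsCutPoint σ m ↔ MapsTo σ (Iio m) (Iio m) := by
  constructor
  · intro h j hj
    exact (h j hj.le).lt_of_ne fun heq => hj.ne (σ.injective (heq.trans hm.symm))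
  · intro h j hj
    rcases hj.eq_or_lt with rfl | hlt
    · exact hm.le
    · exact (h hlt).le

theorem isCutPoint_of_covBy_of_mapsTo_Iio (hij : i ⋖ j) (h : MapsTo σ (Iio j) (Iio j)) :
    IsCutPoint σ i :=
  fun _ hk => hij.le_of_lt (h (hk.trans_lt hij.lt))

/-- The section of `m` is the singleton `{m}`. -/
def HasTrivialSection (σ : Perm (Fin n)) (m : Fin n) : Prop :=
  ∀ j : Fin n, InSameSection σ m j → j = m

theorem HasTrivialSection.isCutPoint_of_covBy (h : HasTrivialSection σ m) (him : i ⋖ m) :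
    IsCutPoint σ i := by
  by_contra hcut
  refine him.ne (h i (.inr ⟨him.le, fun c hic hcm => ?_⟩))
  rwa [(him.le_of_lt hcm).antisymm hic]

theorem hasTrivialSection_iff_isCutPoint (hm : σ m = m) :
    HasTrivialSection σ m ↔ IsCutPoint σ m := by
  constructor
  · intro h
    refine (isCutPoint_iff_mapsTo_Iio hm).2 fun j hj => ?_
    obtain ⟨c, hjc, hcm⟩ := exists_le_covBy_of_lt (mem_Iio.1 hj)
    exact (h.isCutPoint_of_covBy hcm j hjc).trans_lt hcm.lt
  · rintro hcut j (⟨hmj, hsec⟩ | ⟨hjm, hsec⟩)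
    · by_contra hne
      exact hsec m le_rfl (hmj.lt_of_ne' hne) hcut
    · by_contra hne
      obtain ⟨c, hjc, hcm⟩ := exists_le_covBy_of_lt (hjm.lt_of_ne hne)
      exact hsec c hjc hcm.lt
        (isCutPoint_of_covBy_of_mapsTo_Iio hcm ((isCutPoint_iff_mapsTo_Iio hm).1 hcut))

theorem UpperCanonical.isCutPoint_of_isReducingPair (hσ : UpperCanonical σ)
    (hij : IsReducingPair σ i j) (hi : σ i = j) : IsCutPoint σ j := by
  intro k hk
  by_contra! hjk
  have hkj : k ≠ j := by rintro rfl; exact hjk.asymm hij.apply_lt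
  have hki : k ≠ i := by rintro rfl; exact hjk.ne' hi
  have hlt : k < i := (hij.covBy.le_of_lt (hk.lt_of_ne hkj)).lt_of_ne hki
  have hσlt : σ k < j := hi ▸ hσ k i hlt (hk.trans_lt hjk) hij.lt_apply
  exact hσlt.asymm hjk

theorem LowerCanonical.mapsTo_Iio_of_isReducingPair (hσ : LowerCanonical σ)
    (hij : IsReducingPair σ i j) (hj : σ j = i) : MapsTo σ (Iio i) (Iio i) := by
  have hpreimage : ∀ k, σ k < i → k < i := by
    intro k hk
    by_contra! hik
    have hki : k ≠ i := by rintro rfl; exact hk.asymm hij.lt_apply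
    have hkj : k ≠ j := by rintro rfl; exact hk.ne hj
    have hlt : j < k := (hij.covBy.ge_of_gt (hik.lt_of_ne' hki)).lt_of_ne' hkj
    have hσlt : i < σ k := hj ▸ hσ j k hlt hij.apply_lt (hk.trans_le hik)
    exact hσlt.asymm hk
  have hsymm : MapsTo σ.symm (Iio i) (Iio i) := fun k hk =>
    hpreimage _ ((σ.apply_symm_apply k).symm ▸ hk)
  exact Perm.perm_symm_mapsTo_iff_mapsTo.1 hsymm

theorem hasTrivialSection_reduction (hσ : StrangCanonical σ) (hm : reduction σ m = m)
    (hfix : σ m = m → HasTrivialSection σ m) : HasTrivialSection (reduction σ) m := by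
  rw [hasTrivialSection_iff_isCutPoint hm]
  have hr : σ (reducingPerm σ m) = m := hm
  rcases reducingPerm_apply_trichotomy σ m with h | h | h
  · exact (isCutPoint_iff_mapsTo_Iio hm).2 <|
      mapsTo_reduction_of_isLowerSet (isLowerSet_Iio m) (hσ.2.mapsTo_Iio_of_isReducingPair h hr)
  · exact isCutPoint_reduction (hσ.1.isCutPoint_of_isReducingPair h hr)
  · rw [h] at hr
    exact isCutPoint_reduction ((hasTrivialSection_iff_isCutPoint hr).1 (hfix hr))

end Reduction

/-- The reduction of a Strang canonical permutation is Strang canonical;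
moreover, if every fixed point of `σ` lies in a trivial section, the same holds for the
reduction of `σ`. -/
theorem stmt_6 (n : ℕ) (σ : Equiv.Perm (Fin n)) (hsc : StrangCanonical σ) :
    StrangCanonical (reduction σ) ∧
    ((∀ m : Fin n, σ m = m → ∀ j : Fin n, InSameSection σ m j → j = m) →
      ∀ m : Fin n, reduction σ m = m →
        ∀ j : Fin n, InSameSection (reduction σ) m j → j = m) := by
  exact ⟨⟨upperCanonical_reduction hsc.1, lowerCanonical_reduction hsc.2⟩,
    fun hfix m hm => hasTrivialSection_reduction hsc hm (hfix m)⟩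
end

section
/- Let σ be a fixed-point-free row-settled Strang canonical permutation of {1,…,n} (n ≥ 2) that has no cut point c with c < n (i.e., {1,…,n} is a single section), and let w be the bandwidth of σ. Set m = σ⁻¹(n). Then σ(i) > i for all i ≤ m, σ(i) < i for all i > m, σ(m+1) = 1, and moreover m ≤ w and n − m ≤ w. -/
/-!
The index `m` is an ascent because its value is the largest one. Row-settledness rules out any
descent before `m` within its section, and upper-canonicity rules out any ascent after `m`, since
its value would have to exceed the largest one. Hence `m + 1` is the first descent and, by
lower-canonicity, takes the smallest value. The displacements of `m` and `m + 1` then give the two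
bandwidth bounds.
-/

section

variable {n : ℕ} {σ : Equiv.Perm (Fin n)}

theorem natAbs_apply_sub_le_bandwidth (σ : Equiv.Perm (Fin n)) (i : Fin n) :
    ((σ i : ℤ) - (i : ℤ)).natAbs ≤ bandwidth σ :=
  Finset.le_sup (f := fun i : Fin n => ((σ i : ℤ) - (i : ℤ)).natAbs) (Finset.mem_univ i)

theorem apply_le_add_bandwidth (σ : Equiv.Perm (Fin n)) (i : Fin n) :
    (σ i : ℕ) ≤ i + bandwidth σ := by
  have := natAbs_apply_sub_le_bandwidth σ i
  omega

theorem le_apply_add_bandwidth (σ : Equiv.Perm (Fin n)) (i : Fin n) :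
    (i : ℕ) ≤ σ i + bandwidth σ := by
  have := natAbs_apply_sub_le_bandwidth σ i
  omega

theorem RowSettled.lt_apply_of_sameSection (hσ : RowSettled σ) {i j : Fin n}
    (hij : SameSection σ i j) (hi : σ i ≠ i) (hj : j < σ j) : i < σ i := by
  rcases hij.1.eq_or_lt with rfl | hlt
  · exact hj
  · exact hi.lt_or_gt.resolve_left fun hdesc => hσ i j hlt hij ⟨hdesc, hj⟩

theorem UpperCanonical.apply_le_of_isTop (hσ : UpperCanonical σ) {m i : Fin n}
    (hm : IsTop (σ m)) (hmi : m < i) : σ i ≤ i :=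
  not_lt.1 fun hi => (hσ m i hmi (hmi.trans_le (hm i)) hi).not_ge (hm _)

theorem LowerCanonical.le_apply_of_isBot (hσ : LowerCanonical σ) {i k : Fin n}
    (hk : IsBot (σ k)) (hik : i < k) : i ≤ σ i :=
  not_lt.1 fun hi => (hσ i k hik hi ((hk i).trans_lt hik)).not_ge (hk _)

theorem LowerCanonical.isBot_apply_of_forall_lt (hσ : LowerCanonical σ) {j : Fin n}
    (hasc : ∀ i < j, i < σ i) (hj : σ j < j) : IsBot (σ j) := by
  obtain ⟨k, hk⟩ : ∃ k, IsBot (σ k) :=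
    σ.surjective.exists.1 ⟨⟨0, j.pos⟩, fun i => Nat.zero_le i⟩
  have hjk : j ≤ k := not_lt.1 fun hkj => (hasc k hkj).not_ge (hk k)
  have hkj : k ≤ j := not_lt.1 fun hlt => hj.not_ge (hσ.le_apply_of_isBot hk hlt)
  exact le_antisymm hjk hkj ▸ hk

end

/-- Structure of a fixed-point-free row-settled Strang canonical permutation
forming a single section. Here indices are 0-based: 1-based index `i` corresponds to `i - 1`,
so `m = σ⁻¹(n)` in 1-based terms is the `m` with `σ m = n - 1` (0-based), `1 ≤ m + 1 ≤ w` and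
`n - (m + 1) ≤ w` are the 1-based bounds, and `σ(m + 1) = 1` (1-based) reads
`σ ⟨m + 1, _⟩ = ⟨0, _⟩` (0-based). -/
theorem stmt_7 (n : ℕ) (hn : 2 ≤ n) (σ : Equiv.Perm (Fin n))
    (hfree : ∀ i : Fin n, σ i ≠ i)
    (hrs : RowSettled σ) (hsc : StrangCanonical σ)
    (hcut : ∀ c : Fin n, IsCutPoint σ c → (c : ℕ) = n - 1)
    (m : Fin n) (hm : σ m = ⟨n - 1, by omega⟩) :
    (∀ i : Fin n, i ≤ m → i < σ i) ∧
    (∀ i : Fin n, m < i → σ i < i) ∧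
    (∃ h : (m : ℕ) + 1 < n, σ ⟨(m : ℕ) + 1, h⟩ = ⟨0, by omega⟩) ∧
    (m : ℕ) + 1 ≤ bandwidth σ ∧ n - ((m : ℕ) + 1) ≤ bandwidth σ := by
  have htop : IsTop (σ m) := hm ▸ fun i => Nat.le_sub_one_of_lt i.isLt
  have hmσ : m < σ m := (htop m).lt_of_ne (hfree m).symm
  have hsection : ∀ i ≤ m, SameSection σ i m := fun i him =>
    ⟨him, fun c _ hcm hc => (hcm.trans hmσ).ne (by rw [hm]; exact Fin.ext (hcut c hc))⟩
  have hasc : ∀ i ≤ m, i < σ i := fun i him =>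
    hrs.lt_apply_of_sameSection (hsection i him) (hfree i) hmσ
  have hdesc : ∀ i, m < i → σ i < i := fun i hmi =>
    (hsc.1.apply_le_of_isTop htop hmi).lt_of_ne (hfree i)
  have hmn : (m : ℕ) + 1 < n := by
    have : (m : ℕ) < n - 1 := by simpa only [hm, Fin.lt_def] using hmσ
    omega
  have hsucc : σ ⟨(m : ℕ) + 1, hmn⟩ = ⟨0, by omega⟩ :=
    le_antisymm (hsc.2.isBot_apply_of_forall_lt (fun i hi => hasc i (Nat.le_of_lt_succ hi))
      (hdesc _ (Nat.lt_succ_self m)) _) (Nat.zero_le _)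
  refine ⟨hasc, hdesc, ⟨hmn, hsucc⟩, ?_, ?_⟩
  · simpa only [hsucc, zero_add] using le_apply_add_bandwidth σ ⟨(m : ℕ) + 1, hmn⟩
  · have : n - 1 ≤ m + bandwidth σ := by simpa only [hm] using apply_le_add_bandwidth σ m
    omega
end
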